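/- Let 𝒜 = (A_1,…,A_m) be an m-tuple of n×n complex matrices such that Σ_{k=1}^m A_k A_kᴴ is positive definite. Then the function f(X) := log det(Σ_{k=1}^m A_k X A_kᴴ) − log det X, defined on positive definite Hermitian X (where the first determinant is a positive real for every such X), is geodesically convex: for every positive definite Hermitian X and every Hermitian S, the map t ↦ f(X^{1/2} e^{tS} X^{1/2}) is convex on ℝ. -/

import Mathlib

noncomputable section
open scoped Classical
open Matrix
open scoped ComplexOrder

/-- The completely positive operator `T_𝒜(X) = ∑ k, A k * X * (A k)ᴴ`. -/
def Tcp {m n : ℕ} (A : Fin m → Matrix (Fin n) (Fin n) ℂ)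
    (X : Matrix (Fin n) (Fin n) ℂ) : Matrix (Fin n) (Fin n) ℂ :=
  ∑ k, A k * X * (A k)ᴴ

/-- The positive semidefinite square root of a positive semidefinite matrix
(Mathlib's former `Matrix.PosSemidef.sqrt`, since removed). -/
def Matrix.PosSemidef.sqrt {n 𝕜 : Type*} [Fintype n] [RCLike 𝕜] [DecidableEq n]
    {A : Matrix n n 𝕜} (hA : A.PosSemidef) : Matrix n n 𝕜 :=
  hA.1.eigenvectorUnitary.1 * diagonal ((RCLike.ofReal : ℝ → 𝕜) ∘ Real.sqrt ∘ hA.1.eigenvalues) *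
    (star hA.1.eigenvectorUnitary : Matrix n n 𝕜)

/-- The positive semidefinite square root (junk value `0` off PSD matrices). -/
def matSqrt {n : ℕ} (X : Matrix (Fin n) (Fin n) ℂ) : Matrix (Fin n) (Fin n) ℂ :=
  if h : X.PosSemidef then h.sqrt else 0

/-- `f(X) = log det (∑ k, A_k X A_kᴴ) - log det X`. -/
def fdet {m n : ℕ} (A : Fin m → Matrix (Fin n) (Fin n) ℂ)
    (X : Matrix (Fin n) (Fin n) ℂ) : ℝ :=
  Real.log (Tcp A X).det.re - Real.log X.det.re

theorem cauchyBinet_aux {ι κ : Type*} [Fintype ι] [Fintype κ] [DecidableEq ι] [DecidableEq κ]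
    (M : Matrix ι κ ℂ) (N : Matrix κ ι ℂ) :
    (M * N).det = ∑ p : ι → κ, (M.submatrix id p).det * ∏ i, N (p i) i := by
  have h : (M * N).det = ∑ p : ι → κ, ∑ σ : Equiv.Perm ι,
      ((Equiv.Perm.sign σ : ℤ) : ℂ) * ∏ i, M (σ i) (p i) * N (p i) i := by
    simp only [det_apply', mul_apply, Finset.prod_univ_sum, Finset.mul_sum,
      Fintype.piFinset_univ]
    rw [Finset.sum_comm]
  rw [h]
  refine Finset.sum_congr rfl fun p _ => ?_
  rw [det_apply', Finset.sum_mul]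
  refine Finset.sum_congr rfl fun σ _ => ?_
  simp [Finset.prod_mul_distrib, mul_assoc]

theorem cauchyBinet {ι κ : Type*} [Fintype ι] [Fintype κ] [DecidableEq ι] [DecidableEq κ]
    (M : Matrix ι κ ℂ) (N : Matrix κ ι ℂ) :
    (Fintype.card (Equiv.Perm ι) : ℂ) * (M * N).det =
      ∑ p : ι → κ, (M.submatrix id p).det * (N.submatrix p id).det := by
  have h : ∀ τ : Equiv.Perm ι, (M * N).det = ∑ p : ι → κ, (M.submatrix id p).det *
      (((Equiv.Perm.sign τ : ℤ) : ℂ) * ∏ i, N (p (τ i)) i) := by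
    intro τ
    rw [cauchyBinet_aux]
    rw [← (Equiv.arrowCongr τ (Equiv.refl κ)).symm.sum_comp]
    refine Finset.sum_congr rfl fun p _ => ?_
    have h1 : M.submatrix id ((Equiv.arrowCongr τ (Equiv.refl κ)).symm p) =
        (M.submatrix id p).submatrix id τ := by
      ext i j; simp [Equiv.arrowCongr]
    rw [h1, det_permute']
    simp [Equiv.arrowCongr]
    ring
  have h2 : (Fintype.card (Equiv.Perm ι) : ℂ) * (M * N).det =
      ∑ τ : Equiv.Perm ι, (M * N).det := by
    simp
  rw [h2, Finset.sum_congr rfl fun τ _ => h τ, Finset.sum_comm]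
  refine Finset.sum_congr rfl fun p _ => ?_
  rw [det_apply' (N.submatrix p id), Finset.mul_sum]
  simp

theorem Tcp_posDef {m n : ℕ} (A : Fin m → Matrix (Fin n) (Fin n) ℂ)
    (hA : (∑ k, A k * (A k)ᴴ).PosDef) (X : Matrix (Fin n) (Fin n) ℂ) (hX : X.PosDef) :
    (Tcp A X).PosDef := by
  have key : ∀ (Y : Matrix (Fin n) (Fin n) ℂ) (v : Fin n → ℂ),
      star v ⬝ᵥ ((∑ k, A k * Y * (A k)ᴴ) *ᵥ v) =
        ∑ k, star ((A k)ᴴ *ᵥ v) ⬝ᵥ (Y *ᵥ ((A k)ᴴ *ᵥ v)) := by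
    intro Y v
    rw [Matrix.sum_mulVec, dotProduct_sum]
    refine Finset.sum_congr rfl fun k _ => ?_
    rw [star_mulVec, conjTranspose_conjTranspose, ← dotProduct_mulVec, mulVec_mulVec,
      mulVec_mulVec, Matrix.mul_assoc]
  refine PosDef.of_dotProduct_mulVec_pos ?_ ?_
  · unfold Tcp Matrix.IsHermitian
    rw [conjTranspose_sum]
    refine Finset.sum_congr rfl fun k _ => ?_
    simp [conjTranspose_mul, hX.1.eq, Matrix.mul_assoc]
  · intro v hv
    have h1 : ∃ k, (A k)ᴴ *ᵥ v ≠ 0 := by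
      by_contra! hc
      have := hA.dotProduct_mulVec_pos hv
      have h2 := key 1 v
      simp only [Matrix.mul_one] at h2
      rw [h2] at this
      simp [hc] at this
    obtain ⟨k, hk⟩ := h1
    unfold Tcp
    rw [key]
    exact Finset.sum_pos' (fun j _ => hX.posSemidef.dotProduct_mulVec_nonneg _)
      ⟨k, Finset.mem_univ _, hX.dotProduct_mulVec_pos hk⟩

theorem matSqrt_posDef {n : ℕ} (X : Matrix (Fin n) (Fin n) ℂ) (hX : X.PosDef) :
    (matSqrt X).PosDef := by
  unfold matSqrt
  rw [dif_pos hX.posSemidef]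
  unfold Matrix.PosSemidef.sqrt
  rw [(Unitary.isUnit_coe (U := hX.posSemidef.1.eigenvectorUnitary)).posDef_star_right_conjugate_iff]
  rw [posDef_diagonal_iff]
  intro i
  have := hX.eigenvalues_pos i
  simpa using this

theorem exp_herm {n : ℕ} (S : Matrix (Fin n) (Fin n) ℂ) (hS : S.IsHermitian) (t : ℝ) :
    NormedSpace.exp (t • S) = (hS.eigenvectorUnitary : Matrix (Fin n) (Fin n) ℂ) *
      diagonal (fun i => (Real.exp (t * hS.eigenvalues i) : ℂ)) *
      (hS.eigenvectorUnitary : Matrix (Fin n) (Fin n) ℂ)ᴴ := by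
  have hu : IsUnit (hS.eigenvectorUnitary : Matrix (Fin n) (Fin n) ℂ) := Unitary.isUnit_coe
  have hi : (hS.eigenvectorUnitary : Matrix (Fin n) (Fin n) ℂ)⁻¹ =
      (hS.eigenvectorUnitary : Matrix (Fin n) (Fin n) ℂ)ᴴ := by
    apply Matrix.inv_eq_left_inv
    exact Unitary.coe_star_mul_self hS.eigenvectorUnitary
  have h1 : t • S = (hS.eigenvectorUnitary : Matrix (Fin n) (Fin n) ℂ) *
      diagonal (fun i => ((t * hS.eigenvalues i : ℝ) : ℂ)) *
      (hS.eigenvectorUnitary : Matrix (Fin n) (Fin n) ℂ)⁻¹ := by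
    have h2 : diagonal (fun i => ((t * hS.eigenvalues i : ℝ) : ℂ)) =
        t • diagonal (RCLike.ofReal ∘ hS.eigenvalues : Fin n → ℂ) := by
      rw [← diagonal_smul]
      congr 1
      ext i
      simp
    rw [h2, hi]
    conv_lhs => rw [hS.spectral_theorem]
    rw [Unitary.conjStarAlgAut_apply]
    simp [star_eq_conjTranspose]
  rw [h1, Matrix.exp_conj _ _ hu, hi, Matrix.exp_diagonal]
  congr 3
  ext i
  simp [Pi.coe_exp, Complex.exp_eq_exp_ℂ]

/-- log-sum-exp is convex. -/
theorem logSumExp_convex {α : Type*} [Fintype α] (c μ : α → ℝ) (hc : ∀ p, 0 ≤ c p)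
    (hpos : ∀ t : ℝ, 0 < ∑ p, c p * Real.exp (t * μ p)) :
    ConvexOn ℝ Set.univ (fun t : ℝ => Real.log (∑ p, c p * Real.exp (t * μ p))) := by
  refine ⟨convex_univ, ?_⟩
  intro x _ y _ a b ha hb hab
  simp only [smul_eq_mul]
  set P := ∑ p, c p * Real.exp (x * μ p) with hP
  set Q := ∑ p, c p * Real.exp (y * μ p) with hQ
  have hP0 : 0 < P := hpos x
  have hQ0 : 0 < Q := hpos y
  rw [Real.log_le_iff_le_exp (hpos _)]
  have h1 : ∀ p, Real.exp ((a * x + b * y) * μ p) ≤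
      Real.exp (a * Real.log P + b * Real.log Q) *
        (a * (Real.exp (x * μ p) / P) + b * (Real.exp (y * μ p) / Q)) := by
    intro p
    have h := convexOn_exp.2 (Set.mem_univ (x * μ p - Real.log P))
      (Set.mem_univ (y * μ p - Real.log Q)) ha hb hab
    simp only [smul_eq_mul, Real.exp_sub, Real.exp_log hP0, Real.exp_log hQ0] at h
    calc Real.exp ((a * x + b * y) * μ p) = Real.exp (a * Real.log P + b * Real.log Q) *
          Real.exp (a * (x * μ p - Real.log P) + b * (y * μ p - Real.log Q)) := by
          rw [← Real.exp_add]; congr 1; ring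
      _ ≤ _ := by gcongr
  calc ∑ p, c p * Real.exp ((a * x + b * y) * μ p)
      ≤ ∑ p, c p * (Real.exp (a * Real.log P + b * Real.log Q) *
        (a * (Real.exp (x * μ p) / P) + b * (Real.exp (y * μ p) / Q))) :=
        Finset.sum_le_sum fun p _ => mul_le_mul_of_nonneg_left (h1 p) (hc p)
    _ = Real.exp (a * Real.log P + b * Real.log Q) * (a * (P / P) + b * (Q / Q)) := by
        conv_rhs => rw [hP, hQ]
        rw [← hP, ← hQ, Finset.sum_div, Finset.sum_div, Finset.mul_sum, Finset.mul_sum,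
          ← Finset.sum_add_distrib, Finset.mul_sum]
        refine Finset.sum_congr rfl fun p _ => ?_
        ring
    _ = Real.exp (a * Real.log P + b * Real.log Q) := by
        rw [div_self hP0.ne', div_self hQ0.ne', mul_one, mul_one, hab, mul_one]

theorem det_sum_exp {m n : ℕ} (B : Fin m → Matrix (Fin n) (Fin n) ℂ) (l : Fin n → ℝ) :
    ∃ c μ : (Fin n → Fin m × Fin n) → ℝ, (∀ p, 0 ≤ c p) ∧ ∀ t : ℝ,
      (∑ k, B k * diagonal (fun i => (Real.exp (t * l i) : ℂ)) * (B k)ᴴ).det.re =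
        ∑ p, c p * Real.exp (t * μ p) := by
  let M : Matrix (Fin n) (Fin m × Fin n) ℂ := fun i q => B q.1 i q.2
  have hN : (0 : ℝ) < Fintype.card (Equiv.Perm (Fin n)) := by
    exact_mod_cast Fintype.card_pos
  refine ⟨fun p => (Fintype.card (Equiv.Perm (Fin n)) : ℝ)⁻¹ *
    Complex.normSq (M.submatrix id p).det, fun p => ∑ i, l (p i).2, ?_, ?_⟩
  · intro p
    exact mul_nonneg (inv_nonneg.2 hN.le) (Complex.normSq_nonneg _)
  · intro t
    let d : Fin m × Fin n → ℂ := fun q => (Real.exp (t * l q.2) : ℂ)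
    have h1 : ∑ k, B k * diagonal (fun i => (Real.exp (t * l i) : ℂ)) * (B k)ᴴ =
        M * (diagonal d * Mᴴ) := by
      ext i j
      rw [← Matrix.mul_assoc]
      rw [Matrix.sum_apply, Matrix.mul_apply, Fintype.sum_prod_type]
      refine Finset.sum_congr rfl fun k _ => ?_
      rw [Matrix.mul_apply]
      refine Finset.sum_congr rfl fun q _ => ?_
      rw [Matrix.mul_diagonal, Matrix.mul_diagonal]
      rfl
    have h2 := cauchyBinet M (diagonal d * Mᴴ)
    have h3 : ∀ p : Fin n → Fin m × Fin n, (M.submatrix id p).det *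
        ((diagonal d * Mᴴ).submatrix p id).det =
        ((Complex.normSq (M.submatrix id p).det * Real.exp (t * ∑ i, l (p i).2) : ℝ) : ℂ) := by
      intro p
      have h4 : (diagonal d * Mᴴ).submatrix p id =
          diagonal (d ∘ p) * (M.submatrix id p)ᴴ := by
        ext i j
        simp [Matrix.diagonal_mul]
      rw [h4, det_mul, det_diagonal, det_conjTranspose]
      have h5 : ∏ i, (d ∘ p) i = ((Real.exp (t * ∑ i, l (p i).2) : ℝ) : ℂ) := by
        rw [Finset.mul_sum, Real.exp_sum]
        push_cast
        simp [d]
      rw [h5, Complex.ofReal_mul, Complex.normSq_eq_conj_mul_self]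
      simp only [RCLike.star_def]
      ring
    rw [h1]
    rw [Finset.sum_congr rfl fun p _ => h3 p, ← Complex.ofReal_sum] at h2
    have h6 := congrArg Complex.re h2
    rw [Complex.ofReal_re, ← Complex.ofReal_natCast, Complex.re_ofReal_mul] at h6
    simp only [mul_assoc]
    rw [← Finset.mul_sum, ← h6, inv_mul_cancel_left₀ hN.ne']

/-- If `∑ k, A_k A_kᴴ` is positive definite, then `det (∑ k, A_k X A_kᴴ)` is a positive
real for every positive definite `X`, and `f` is geodesically convex. -/
theorem fdet_geodesically_convex {m n : ℕ} (A : Fin m → Matrix (Fin n) (Fin n) ℂ)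
    (hA : (∑ k, A k * (A k)ᴴ).PosDef) :
    (∀ X : Matrix (Fin n) (Fin n) ℂ, X.PosDef →
        0 < (Tcp A X).det.re ∧ (Tcp A X).det.im = 0)
      ∧ (∀ X : Matrix (Fin n) (Fin n) ℂ, X.PosDef →
          ∀ S : Matrix (Fin n) (Fin n) ℂ, S.IsHermitian →
            ConvexOn ℝ Set.univ
              (fun t : ℝ => fdet A (matSqrt X * NormedSpace.exp (t • S) * matSqrt X))) := by
  refine ⟨fun X hX => ?_, fun X hX S hS => ?_⟩
  · have h := (Tcp_posDef A hA X hX).det_pos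
    rw [Complex.lt_def] at h
    exact ⟨by simpa using h.1, by simpa using h.2.symm⟩
  · have hW := matSqrt_posDef X hX
    set W := matSqrt X with hWdef
    set U := (hS.eigenvectorUnitary : Matrix (Fin n) (Fin n) ℂ) with hU
    have hUu : IsUnit U := Unitary.isUnit_coe
    have hCu : IsUnit (W * U) := hW.isUnit.mul hUu
    have hY : ∀ t : ℝ, W * NormedSpace.exp (t • S) * W =
        (W * U) * diagonal (fun i => (Real.exp (t * hS.eigenvalues i) : ℂ)) * (W * U)ᴴ := by
      intro t
      rw [exp_herm S hS t, conjTranspose_mul, hW.1.eq]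
      simp only [Matrix.mul_assoc, hU]
    have hYpos : ∀ t : ℝ, (W * NormedSpace.exp (t • S) * W).PosDef := by
      intro t
      rw [hY t, ← star_eq_conjTranspose, hCu.posDef_star_right_conjugate_iff,
        posDef_diagonal_iff]
      intro i
      exact_mod_cast Real.exp_pos _
    obtain ⟨c, μ, hc, hdet⟩ := det_sum_exp (fun k => A k * (W * U)) hS.eigenvalues
    have hT : ∀ t : ℝ, (Tcp A (W * NormedSpace.exp (t • S) * W)).det.re =
        ∑ p, c p * Real.exp (t * μ p) := by
      intro t
      rw [← hdet t, hY t]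
      unfold Tcp
      congr 3
      funext k
      simp only [conjTranspose_mul, Matrix.mul_assoc]
    have hTpos : ∀ t : ℝ, 0 < ∑ p, c p * Real.exp (t * μ p) := by
      intro t
      rw [← hT t]
      have h := (Tcp_posDef A hA _ (hYpos t)).det_pos
      rw [Complex.lt_def] at h
      simpa using h.1
    have hD : ∀ t : ℝ, (W * NormedSpace.exp (t • S) * W).det.re =
        Complex.normSq (W * U).det * Real.exp (t * ∑ i, hS.eigenvalues i) := by
      intro t
      rw [hY t, det_mul, det_mul, det_diagonal, det_conjTranspose]
      have h5 : ∏ i, (Real.exp (t * hS.eigenvalues i) : ℂ) =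
          ((Real.exp (t * ∑ i, hS.eigenvalues i) : ℝ) : ℂ) := by
        rw [Finset.mul_sum, Real.exp_sum]
        push_cast
        rfl
      rw [h5, mul_right_comm, RCLike.star_def, Complex.mul_conj, ← Complex.ofReal_mul,
        Complex.ofReal_re]
    have hn : Complex.normSq (W * U).det ≠ 0 := by
      rw [Ne, Complex.normSq_eq_zero]
      exact ((Matrix.isUnit_iff_isUnit_det _).1 hCu).ne_zero
    have hlog : ∀ t : ℝ, fdet A (W * NormedSpace.exp (t • S) * W) =
        Real.log (∑ p, c p * Real.exp (t * μ p)) -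
          (Real.log (Complex.normSq (W * U).det) + t * ∑ i, hS.eigenvalues i) := by
      intro t
      unfold fdet
      rw [hT t, hD t, Real.log_mul hn (Real.exp_ne_zero _), Real.log_exp]
    have hcv := logSumExp_convex c μ hc hTpos
    refine ⟨convex_univ, ?_⟩
    intro x hx y hy a b ha hb hab
    have h := hcv.2 hx hy ha hb hab
    simp only [hlog]
    simp only [smul_eq_mul] at h ⊢
    have hb' : b = 1 - a := by linarith
    subst hb'
    linarith
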